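/- Let F be an √−1ℝ-valued 2-form on ℝ⁸ = ℂ⁴ satisfying F(Ju,Jv) = F(u,v) for all u,v (equivalently, the (0,2)-part of F vanishes). Then F is a deformed Hermitian Yang–Mills curvature with phase 1, i.e. Im( (ω + F)⁴ ) = 0, if and only if ( F + (1/6)·*F³ ) + *( ( F + (1/6)·*F³ ) ∧ Φ ) = 0, where Φ = ω²/2 + Re Ω (this is the Spin(7) deformed Donaldson–Thomas equation π²₇( F + (1/6)·*F³ ) = 0 for the Cayley form Φ). -/

import Mathlib

open scoped BigOperators

noncomputable section

namespace FMpaper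

variable {K : Type*} [NormedField K] [NormedAlgebra ℝ K]

/-- Coefficient model for the exterior algebra of `(ℝⁿ)*` with scalars in `K`:
a form is given by its coefficients on the basis `e^S`, `S ⊆ {0, …, n-1}` sorted. -/
abbrev Form (K : Type*) (n : ℕ) := Finset (Fin n) → K

variable {n : ℕ}

/-- Sign such that `e^s ∧ e^t = signMerge s t • e^(s ∪ t)` for disjoint sorted `s, t`. -/
def signMerge (s t : Finset (Fin n)) : K :=
  (-1 : K) ^ (((s ×ˢ t).filter (fun p => p.2 < p.1)).card)

/-- Wedge product. -/
def wedge (α β : Form K n) : Form K n :=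
  fun u => ∑ s ∈ u.powerset, signMerge s (u \ s) * α s * β (u \ s)

/-- Hodge star operator (for the standard inner product and orientation `e^{0⋯(n-1)}`). -/
def hstar (α : Form K n) : Form K n :=
  fun t => signMerge tᶜ t * α tᶜ

/-- Interior product with the basis vector `e_μ`. -/
def iprodB (μ : Fin n) (α : Form K n) : Form K n :=
  fun t => if μ ∈ t then 0
    else (-1 : K) ^ ((t.filter (fun j => j < μ)).card) * α (insert μ t)

/-- Interior product with the vector `v`. -/
def iprod (v : Fin n → K) (α : Form K n) : Form K n :=
  fun t => ∑ μ, v μ * iprodB μ α t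

/-- The basis covector `e^i` as a 1-form. -/
def e1 (i : Fin n) : Form K n := fun s => if s = {i} then 1 else 0

/-- The covector `v♭` dual to a vector `v`. -/
def flat (v : Fin n → K) : Form K n := ∑ i, v i • e1 i

/-- The vector `α♯` dual to a 1-form `α`. -/
def sharp1 (α : Form K n) : Fin n → K := fun i => α {i}

/-- The inner product of forms (extended `K`-bilinearly). -/
def inner' (α β : Form K n) : K := ∑ s, α s * β s

/-- The (Euclidean) norm of a form; for an `√-1 ℝ`-valued form `√-1 γ` this is `‖γ‖`. -/
def fnorm (α : Form K n) : ℝ := Real.sqrt (∑ s, ‖α s‖ ^ 2)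

/-- `α` is homogeneous of degree `k`. -/
def isGrade (k : ℕ) (α : Form K n) : Prop := ∀ s, s.card ≠ k → α s = 0

/-- Evaluation of a `k`-form on `k` vectors. -/
def evalForm {k : ℕ} (α : Form K n) (v : Fin k → (Fin n → K)) : K :=
  ∑ s : Finset (Fin n), α s *
    (if h : s.card = k then
      Matrix.det (Matrix.of fun i j => v i ((s.orderIsoOfFin h j : Fin n))) else 0)

/-- The matrix of the skew-symmetric endomorphism `γ♯` associated with a 2-form `γ`
via `⟨γ♯ u, v⟩ = γ(u, v)`. -/
def mat2 (γ : Form K n) : Matrix (Fin n) (Fin n) K :=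
  Matrix.of fun i j => if i < j then γ {i, j} else if j < i then - γ {i, j} else 0

/-- The standard `G₂` 3-form `φ = e^{123}+e^{145}+e^{167}+e^{246}−e^{257}−e^{347}−e^{356}`
on `ℝ⁷` (indices `1, …, 7` shifted to `0, …, 6`). -/
def phi7 : Form K 7 := fun s =>
  if s = ({0, 1, 2} : Finset (Fin 7)) then 1
  else if s = ({0, 3, 4} : Finset (Fin 7)) then 1
  else if s = ({0, 5, 6} : Finset (Fin 7)) then 1
  else if s = ({1, 3, 5} : Finset (Fin 7)) then 1
  else if s = ({1, 4, 6} : Finset (Fin 7)) then -1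
  else if s = ({2, 3, 6} : Finset (Fin 7)) then -1
  else if s = ({2, 4, 5} : Finset (Fin 7)) then -1
  else 0

/-- `*₇φ = e^{4567}+e^{2367}+e^{2345}+e^{1357}−e^{1346}−e^{1256}−e^{1247}` on `ℝ⁷`. -/
def psi7 : Form K 7 := fun s =>
  if s = ({3, 4, 5, 6} : Finset (Fin 7)) then 1
  else if s = ({1, 2, 5, 6} : Finset (Fin 7)) then 1
  else if s = ({1, 2, 3, 4} : Finset (Fin 7)) then 1
  else if s = ({0, 2, 4, 6} : Finset (Fin 7)) then 1
  else if s = ({0, 2, 3, 5} : Finset (Fin 7)) then -1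
  else if s = ({0, 1, 4, 5} : Finset (Fin 7)) then -1
  else if s = ({0, 1, 3, 6} : Finset (Fin 7)) then -1
  else 0

/-- The `G₂` 3-form `φ` on `V = span{e₁, …, e₇} ⊂ ℝ⁸`, regarded as a form on `ℝ⁸`
annihilated by `i(e₀)` (indices `1, …, 7` of `ℝ⁸`). -/
def phi8 : Form K 8 := fun s =>
  if s = ({1, 2, 3} : Finset (Fin 8)) then 1
  else if s = ({1, 4, 5} : Finset (Fin 8)) then 1
  else if s = ({1, 6, 7} : Finset (Fin 8)) then 1
  else if s = ({2, 4, 6} : Finset (Fin 8)) then 1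
  else if s = ({2, 5, 7} : Finset (Fin 8)) then -1
  else if s = ({3, 4, 7} : Finset (Fin 8)) then -1
  else if s = ({3, 5, 6} : Finset (Fin 8)) then -1
  else 0

/-- `*₇φ` on `V ⊂ ℝ⁸`, regarded as a 4-form on `ℝ⁸` annihilated by `i(e₀)`. -/
def psi8 : Form K 8 := fun s =>
  if s = ({4, 5, 6, 7} : Finset (Fin 8)) then 1
  else if s = ({2, 3, 6, 7} : Finset (Fin 8)) then 1
  else if s = ({2, 3, 4, 5} : Finset (Fin 8)) then 1
  else if s = ({1, 3, 5, 7} : Finset (Fin 8)) then 1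
  else if s = ({1, 3, 4, 6} : Finset (Fin 8)) then -1
  else if s = ({1, 2, 5, 6} : Finset (Fin 8)) then -1
  else if s = ({1, 2, 4, 7} : Finset (Fin 8)) then -1
  else 0

/-- The standard Cayley 4-form `Φ = e⁰ ∧ φ + *₇φ` on `ℝ⁸`. -/
def Phi8 : Form K 8 := wedge (e1 0) phi8 + psi8

/-- The index set of `V = span{e₁, …, e₇} ⊂ ℝ⁸`. -/
def Vset : Finset (Fin 8) := {1, 2, 3, 4, 5, 6, 7}

/-- The Hodge star `*₇` of `V ⊂ ℝ⁸` (volume form `e^{1⋯7}`), acting on forms on `ℝ⁸`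
annihilated by `i(e₀)`. -/
def star7 (α : Form K 8) : Form K 8 :=
  fun t => if (0 : Fin 8) ∈ t then 0 else signMerge (Vset \ t) t * α (Vset \ t)

/-- `α` is (the pullback of) a form on `V`, i.e. `i(e₀) α = 0`. -/
def onV (α : Form K 8) : Prop := ∀ s, (0 : Fin 8) ∈ s → α s = 0

/-- `λ²(α) = ½ (e⁰ ∧ α + i(α♯) φ)` for `α ∈ V*`. -/
def lambda2 (α : Form K 8) : Form K 8 :=
  (2 : K)⁻¹ • (wedge (e1 0) α + iprod (sharp1 α) phi8)

/-- `λ⁴(α) = (1/√8) (e⁰ ∧ i(α♯) *₇φ − α ∧ φ)` for `α ∈ V*`. -/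
def lambda4 (α : Form K 8) : Form K 8 :=
  (algebraMap ℝ K (Real.sqrt 8))⁻¹ • (wedge (e1 0) (iprod (sharp1 α) psi8) - wedge α phi8)

/-- `λ⁶(α) = *₈ λ²(α)` for `α ∈ V*`. -/
def lambda6 (α : Form K 8) : Form K 8 := hstar (lambda2 α)

/-- The projection `π²₇(α) = (α + *₈(Φ ∧ α))/4` onto `Λ²₇`. -/
def pi27 (α : Form K 8) : Form K 8 := (4 : K)⁻¹ • (α + hstar (wedge Phi8 α))

/-- The projection `π⁴₇(β) = Σ_{μ=1}^{7} ⟨β, λ⁴(e^μ)⟩ λ⁴(e^μ)` onto `Λ⁴₇`. -/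
def pi47 (β : Form K 8) : Form K 8 :=
  ∑ μ : Fin 7, inner' β (lambda4 (e1 μ.succ)) • lambda4 (e1 μ.succ)

/-- `τ(u₀,u₁,u₂,u₃) = Σ_{μ=1}^{7} λ⁴(e^μ)(u₀,u₁,u₂,u₃) ⬝ λ⁴(e^μ) = π⁴₇(u₀♭∧u₁♭∧u₂♭∧u₃♭)`. -/
def tau4 (u : Fin 4 → (Fin 8 → K)) : Form K 8 :=
  ∑ μ : Fin 7, evalForm (lambda4 (e1 μ.succ)) u • lambda4 (e1 μ.succ)

/-- Partial derivative `∂f^a/∂x^j` at `x`. -/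
def pd {m p : ℕ} (f : (Fin m → ℝ) → (Fin p → ℝ)) (x : Fin m → ℝ) (j : Fin m) (a : Fin p) : ℝ :=
  fderiv ℝ f x (Pi.single j 1) a


/-! The Calabi–Yau structure of `ℝ⁸ = ℂ⁴` with complex coordinates
`z^k = x^{2k-2} + √-1 x^{2k-1}`. -/

/-- The standard Kähler form `ω = e^{01} + e^{23} + e^{45} + e^{67}`. -/
def omegaCY : Form ℂ 8 := fun s =>
  if s = ({0, 1} : Finset (Fin 8)) then 1
  else if s = ({2, 3} : Finset (Fin 8)) then 1
  else if s = ({4, 5} : Finset (Fin 8)) then 1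
  else if s = ({6, 7} : Finset (Fin 8)) then 1
  else 0

/-- The index of `x^{2k-2}` (0-indexed: `x^{2k}`). -/
def zr (k : Fin 4) : Fin 8 := ⟨2 * k.1, by have := k.isLt; omega⟩

/-- The index of `x^{2k-1}` (0-indexed: `x^{2k+1}`). -/
def zi (k : Fin 4) : Fin 8 := ⟨2 * k.1 + 1, by have := k.isLt; omega⟩

/-- `dz^k = dx^{2k-2} + √-1 dx^{2k-1}`. -/
def dzf (k : Fin 4) : Form ℂ 8 := e1 (zr k) + Complex.I • e1 (zi k)

/-- The standard holomorphic volume form `Ω = dz¹ ∧ dz² ∧ dz³ ∧ dz⁴`. -/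
def OmegaCY : Form ℂ 8 := wedge (dzf 0) (wedge (dzf 1) (wedge (dzf 2) (dzf 3)))

/-- The real 4-form `Re Ω`. -/
def ReOmegaCY : Form ℂ 8 := fun s => ((OmegaCY s).re : ℂ)

/-- The Spin(7) (Cayley) 4-form `Φ = ω²/2 + Re Ω` on the Calabi–Yau 4-fold `ℂ⁴`. -/
def PhiCY : Form ℂ 8 := (2 : ℂ)⁻¹ • wedge omegaCY omegaCY + ReOmegaCY

/-- The standard complex structure `J` of `ℂ⁴` acting on (complexified) vectors. -/
def Jv (v : Fin 8 → ℂ) : Fin 8 → ℂ := fun i =>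
  if _h : (i : ℕ) % 2 = 0 then - v ⟨(i : ℕ) + 1, by have := i.isLt; omega⟩
  else v ⟨(i : ℕ) - 1, by have := i.isLt; omega⟩

/-! Put `A = F + (1/6) *F³`, which is again a 2-form of type `(1,1)`.

A form of type `(1,1)` wedges to zero with `Ω` and its conjugate, hence with `Re Ω`, while
`*(A ∧ ω²/2) = ⟨A, ω⟩ ω - A` for every `A` of type `(1,1)`. Therefore
`A + *(A ∧ Φ) = ⟨A, ω⟩ ω`, and the deformed Donaldson–Thomas equation says exactly `⟨A, ω⟩ = 0`.

On the other side, conjugation turns `(ω + F)⁴` into `(ω - F)⁴`, so twice its imaginary part is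
`8 (ω³ ∧ F + F³ ∧ ω)` up to a factor `√-1`. Since `*ω³ = 6 ω`, this is `48 ⟨A, ω⟩` times the volume
form.
-/

variable {𝕜 : Type*} [NormedField 𝕜]

/-! ### The exterior algebra in coefficients -/

lemma signMerge_eq_prod (s t : Finset (Fin n)) :
    (signMerge s t : 𝕜) = ∏ i ∈ s, ∏ j ∈ t, if j < i then -1 else 1 := by
  rw [← Finset.prod_product', Finset.prod_ite, Finset.prod_const, Finset.prod_const_one, mul_one,
    signMerge]

lemma signMerge_union_left {s t : Finset (Fin n)} (h : Disjoint s t) (u : Finset (Fin n)) :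
    (signMerge (s ∪ t) u : 𝕜) = signMerge s u * signMerge t u := by
  simp only [signMerge_eq_prod, Finset.prod_union h]

lemma signMerge_union_right {t u : Finset (Fin n)} (h : Disjoint t u) (s : Finset (Fin n)) :
    (signMerge s (t ∪ u) : 𝕜) = signMerge s t * signMerge s u := by
  simp only [signMerge_eq_prod, Finset.prod_union h, Finset.prod_mul_distrib]

lemma signMerge_mul_self (s t : Finset (Fin n)) :
    (signMerge s t : 𝕜) * signMerge s t = 1 := by
  rw [signMerge, ← mul_pow, neg_one_mul, neg_neg, one_pow]

lemma signMerge_mul_swap {s t : Finset (Fin n)} (h : Disjoint s t) :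
    (signMerge s t : 𝕜) * signMerge t s = (-1) ^ (s.card * t.card) := by
  simp only [signMerge_eq_prod]
  rw [Finset.prod_comm (s := t), ← Finset.prod_mul_distrib, pow_mul', ← Finset.prod_const]
  refine Finset.prod_congr rfl fun i hi => ?_
  rw [← Finset.prod_mul_distrib, ← Finset.prod_const]
  refine Finset.prod_congr rfl fun j hj => ?_
  rcases lt_or_gt_of_ne (Finset.disjoint_iff_ne.1 h i hi j hj) with hij | hij <;>
    simp [hij, hij.not_gt]

lemma wedge_add_left (α β γ : Form 𝕜 n) : wedge (α + β) γ = wedge α γ + wedge β γ := by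
  funext u
  simp only [wedge, Pi.add_apply, mul_add, add_mul, Finset.sum_add_distrib]

lemma wedge_add_right (α β γ : Form 𝕜 n) : wedge α (β + γ) = wedge α β + wedge α γ := by
  funext u
  simp only [wedge, Pi.add_apply, mul_add, Finset.sum_add_distrib]

lemma wedge_smul_left (c : 𝕜) (α β : Form 𝕜 n) : wedge (c • α) β = c • wedge α β := by
  funext u
  simp only [wedge, Pi.smul_apply, smul_eq_mul, Finset.mul_sum, mul_assoc, mul_left_comm c]

lemma wedge_smul_right (c : 𝕜) (α β : Form 𝕜 n) : wedge α (c • β) = c • wedge α β := by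
  funext u
  simp only [wedge, Pi.smul_apply, smul_eq_mul, Finset.mul_sum, mul_left_comm c]

lemma zero_wedge (α : Form 𝕜 n) : wedge 0 α = 0 := by
  funext u
  simp only [wedge, Pi.zero_apply, mul_zero, zero_mul, Finset.sum_const_zero]

lemma wedge_zero (α : Form 𝕜 n) : wedge α 0 = 0 := by
  funext u
  simp only [wedge, Pi.zero_apply, mul_zero, Finset.sum_const_zero]

lemma wedge_sum_left {ι : Type*} (s : Finset ι) (α : ι → Form 𝕜 n) (β : Form 𝕜 n) :
    wedge (∑ i ∈ s, α i) β = ∑ i ∈ s, wedge (α i) β := by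
  funext u
  simp only [wedge, Finset.sum_apply, Finset.mul_sum, Finset.sum_mul]
  exact Finset.sum_comm

lemma wedge_sum_right {ι : Type*} (s : Finset ι) (α : Form 𝕜 n) (β : ι → Form 𝕜 n) :
    wedge α (∑ i ∈ s, β i) = ∑ i ∈ s, wedge α (β i) := by
  funext u
  simp only [wedge, Finset.sum_apply, Finset.mul_sum]
  exact Finset.sum_comm

lemma wedge_assoc (α β γ : Form 𝕜 n) : wedge (wedge α β) γ = wedge α (wedge β γ) := by
  funext u
  simp only [wedge, Finset.sum_mul, Finset.mul_sum, Finset.sum_sigma']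
  refine Finset.sum_nbij' (fun p => ⟨p.2, p.1 \ p.2⟩) (fun p => ⟨p.1 ∪ p.2, p.1⟩) ?_ ?_ ?_ ?_ ?_ <;>
    rintro ⟨s, r⟩ h <;> simp only [Finset.mem_sigma, Finset.mem_powerset] at h
  · simp only [Finset.mem_sigma, Finset.mem_powerset]
    exact ⟨h.2.trans h.1, Finset.sdiff_subset_sdiff h.1 le_rfl⟩
  · simp only [Finset.mem_sigma, Finset.mem_powerset]
    exact ⟨Finset.union_subset h.1 (h.2.trans Finset.sdiff_subset), Finset.subset_union_left⟩
  · simp [Finset.union_sdiff_of_subset h.2]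
  · have hsr : Disjoint s r := Finset.disjoint_sdiff.mono_right h.2
    simp [Finset.union_sdiff_cancel_left hsr]
  · have hs : s = r ∪ s \ r := (Finset.union_sdiff_of_subset h.2).symm
    have hur : u \ r = s \ r ∪ u \ s := by
      rw [Finset.union_comm, Finset.sdiff_union_sdiff_cancel h.1 h.2]
    have hd : Disjoint (s \ r) (u \ s) := Finset.disjoint_sdiff.mono_left Finset.sdiff_subset
    have hus : (u \ r) \ (s \ r) = u \ s := by
      rw [hur, Finset.union_sdiff_cancel_left hd]
    have hl : (signMerge s (u \ s) : 𝕜) = signMerge r (u \ s) * signMerge (s \ r) (u \ s) := by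
      rw [← signMerge_union_left Finset.disjoint_sdiff, ← hs]
    have hr : (signMerge r (u \ r) : 𝕜) = signMerge r (s \ r) * signMerge r (u \ s) := by
      rw [← signMerge_union_right hd, ← hur]
    simp only [hus, hl, hr]
    ring

lemma isGrade_add {p : ℕ} {α β : Form 𝕜 n} (hα : isGrade p α) (hβ : isGrade p β) :
    isGrade p (α + β) := fun s hs => by
  rw [Pi.add_apply, hα s hs, hβ s hs, add_zero]

lemma isGrade_smul {p : ℕ} (c : 𝕜) {α : Form 𝕜 n} (hα : isGrade p α) : isGrade p (c • α) :=
  fun s hs => by rw [Pi.smul_apply, hα s hs, smul_zero]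

lemma isGrade_wedge {p q : ℕ} {α β : Form 𝕜 n} (hα : isGrade p α) (hβ : isGrade q β) :
    isGrade (p + q) (wedge α β) := by
  intro u hu
  refine Finset.sum_eq_zero fun s hs => ?_
  have hcard := Finset.card_sdiff_add_card_eq_card (Finset.mem_powerset.1 hs)
  by_cases hsp : s.card = p
  · rw [hβ (u \ s) (by omega), mul_zero]
  · rw [hα s hsp, mul_zero, zero_mul]

lemma wedge_comm_of_isGrade {p q : ℕ} {α β : Form 𝕜 n} (hα : isGrade p α) (hβ : isGrade q β) :
    wedge α β = (-1 : 𝕜) ^ (p * q) • wedge β α := by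
  funext u
  simp only [wedge, Pi.smul_apply, smul_eq_mul, Finset.mul_sum]
  refine Finset.sum_nbij' (u \ ·) (u \ ·) (by simp) (by simp)
    (fun s hs => Finset.sdiff_sdiff_eq_self (Finset.mem_powerset.1 hs))
    (fun s hs => Finset.sdiff_sdiff_eq_self (Finset.mem_powerset.1 hs)) fun s hs => ?_
  rw [Finset.sdiff_sdiff_eq_self (Finset.mem_powerset.1 hs)]
  by_cases hsp : s.card = p
  · by_cases hsq : (u \ s).card = q
    · rw [← hsp, ← hsq, ← signMerge_mul_swap Finset.disjoint_sdiff]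
      linear_combination (-(signMerge s (u \ s) * α s * β (u \ s) : 𝕜)) *
        signMerge_mul_self (𝕜 := 𝕜) (u \ s) s
    · rw [hβ _ hsq]; ring
  · rw [hα _ hsp]; ring

lemma wedge_comm_of_even {p q : ℕ} (hp : Even p) {α β : Form 𝕜 n} (hα : isGrade p α)
    (hβ : isGrade q β) : wedge α β = wedge β α := by
  rw [wedge_comm_of_isGrade hα hβ, (hp.mul_right q).neg_one_pow, one_smul]

lemma wedge_left_comm_of_even {p q : ℕ} (hp : Even p) {α β : Form 𝕜 n} (hα : isGrade p α)
    (hβ : isGrade q β) (γ : Form 𝕜 n) :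
    wedge α (wedge β γ) = wedge β (wedge α γ) := by
  rw [← wedge_assoc, wedge_comm_of_even hp hα hβ, wedge_assoc]

lemma wedge_pow_four_add_sub_wedge_pow_four_sub {p : ℕ} (hp : Even p) {α β : Form 𝕜 n}
    (hα : isGrade p α) (hβ : isGrade p β) :
    wedge (α + β) (wedge (α + β) (wedge (α + β) (α + β))) -
        wedge (α - β) (wedge (α - β) (wedge (α - β) (α - β))) =
      (8 : 𝕜) • (wedge (wedge α (wedge α α)) β + wedge (wedge β (wedge β β)) α) := by
  have hβα : wedge β α = wedge α β := wedge_comm_of_even hp hβ hα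
  have hβαγ (γ : Form 𝕜 n) : wedge β (wedge α γ) = wedge α (wedge β γ) :=
    wedge_left_comm_of_even hp hβ hα γ
  rw [sub_eq_add_neg α β, ← neg_one_smul 𝕜 β]
  simp only [wedge_add_left, wedge_add_right, wedge_smul_left, wedge_smul_right, wedge_assoc, hβα,
    hβαγ]
  module

lemma wedge_anticomm {α β : Form 𝕜 n} (hα : isGrade 1 α) (hβ : isGrade 1 β) :
    wedge α β = -wedge β α := by
  rw [wedge_comm_of_isGrade hα hβ, mul_one, pow_one, neg_one_smul]

lemma wedge_left_anticomm {α β : Form 𝕜 n} (hα : isGrade 1 α) (hβ : isGrade 1 β)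
    (γ : Form 𝕜 n) : wedge α (wedge β γ) = -wedge β (wedge α γ) := by
  rw [← wedge_assoc, wedge_anticomm hα hβ, ← neg_one_smul 𝕜, wedge_smul_left, wedge_assoc,
    neg_one_smul]

lemma wedge_self_eq_zero [CharZero 𝕜] {α : Form 𝕜 n} (hα : isGrade 1 α) : wedge α α = 0 :=
  self_eq_neg.1 (wedge_anticomm hα hα)

lemma wedge_wedge_self_eq_zero [CharZero 𝕜] {α : Form 𝕜 n} (hα : isGrade 1 α) (γ : Form 𝕜 n) :
    wedge α (wedge α γ) = 0 := by
  rw [← wedge_assoc, wedge_self_eq_zero hα, zero_wedge]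

/-! ### Interior product, Hodge star and inner product -/

lemma signMerge_singleton_left (i : Fin n) (s : Finset (Fin n)) :
    (signMerge {i} s : 𝕜) = (-1) ^ (s.filter (· < i)).card := by
  rw [signMerge_eq_prod, Finset.prod_singleton, Finset.prod_ite, Finset.prod_const,
    Finset.prod_const_one, mul_one]

lemma iprodB_of_mem {i : Fin n} {s : Finset (Fin n)} (h : i ∈ s) (α : Form 𝕜 n) :
    iprodB i α s = 0 := if_pos h

lemma iprodB_of_notMem {i : Fin n} {s : Finset (Fin n)} (h : i ∉ s) (α : Form 𝕜 n) :
    iprodB i α s = signMerge {i} s * α (insert i s) := by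
  rw [iprodB, if_neg h, signMerge_singleton_left]

lemma iprodB_smul (i : Fin n) (c : 𝕜) (α : Form 𝕜 n) : iprodB i (c • α) = c • iprodB i α := by
  funext s
  by_cases h : i ∈ s
  · simp only [Pi.smul_apply, iprodB_of_mem h, smul_zero]
  · simp only [Pi.smul_apply, iprodB_of_notMem h, smul_eq_mul, mul_left_comm c]

lemma iprodB_wedge_of_notMem {p : ℕ} {α : Form 𝕜 n} (hα : isGrade p α) (β : Form 𝕜 n)
    {i : Fin n} {u : Finset (Fin n)} (hi : i ∉ u) :
    iprodB i (wedge α β) u =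
      wedge (iprodB i α) β u + (-1 : 𝕜) ^ p * wedge α (iprodB i β) u := by
  rw [iprodB_of_notMem hi]
  simp only [wedge]
  rw [Finset.sum_powerset_insert hi, mul_add, add_comm]
  simp only [Finset.mul_sum]
  congr 1 <;> refine Finset.sum_congr rfl fun s hs => ?_
  all_goals
    have hsu : s ⊆ u := Finset.mem_powerset.1 hs
    have his : i ∉ s := fun h => hi (hsu h)
    have hiu : i ∉ u \ s := fun h => hi (Finset.sdiff_subset h)
    have hsplit : (signMerge {i} u : 𝕜) = signMerge {i} s * signMerge {i} (u \ s) := by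
      rw [← signMerge_union_right Finset.disjoint_sdiff, Finset.union_sdiff_of_subset hsu]
  · rw [Finset.insert_sdiff_insert, Finset.sdiff_insert_of_notMem hi, iprodB_of_notMem his,
      Finset.insert_eq, signMerge_union_left (Finset.disjoint_singleton_left.2 his), hsplit]
    linear_combination (signMerge {i} s * signMerge s (u \ s) * α ({i} ∪ s) * β (u \ s) : 𝕜) *
      signMerge_mul_self (𝕜 := 𝕜) {i} (u \ s)
  · rw [Finset.insert_sdiff_of_notMem _ his, iprodB_of_notMem hiu, Finset.insert_eq,
      signMerge_union_right (Finset.disjoint_singleton_left.2 hiu), hsplit]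
    by_cases hsp : s.card = p
    · have hswap : (signMerge {i} s * signMerge s {i} : 𝕜) = (-1) ^ p := by
        rw [signMerge_mul_swap (Finset.disjoint_singleton_left.2 his), Finset.card_singleton,
          one_mul, hsp]
      rw [← hswap]
      ring
    · rw [hα s hsp]
      ring

lemma wedge_iprodB_cancel_of_mem {p : ℕ} {α : Form 𝕜 n} (hα : isGrade p α) (β : Form 𝕜 n)
    {i : Fin n} {u : Finset (Fin n)} (hi : i ∈ u) :
    wedge (iprodB i α) β u + (-1 : 𝕜) ^ p * wedge α (iprodB i β) u = 0 := by
  obtain ⟨v, hiv, rfl⟩ : ∃ v, i ∉ v ∧ insert i v = u :=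
    ⟨u.erase i, Finset.notMem_erase i u, Finset.insert_erase hi⟩
  simp only [wedge, Finset.sum_powerset_insert hiv, Finset.mul_sum, mul_add,
    ← Finset.sum_add_distrib]
  refine Finset.sum_eq_zero fun s hs => ?_
  have hsv : s ⊆ v := Finset.mem_powerset.1 hs
  have his : i ∉ s := fun h => hiv (hsv h)
  have hivs : i ∉ v \ s := fun h => hiv (Finset.sdiff_subset h)
  rw [Finset.insert_sdiff_of_notMem _ his, Finset.insert_sdiff_insert,
    Finset.sdiff_insert_of_notMem hiv, iprodB_of_notMem his,
    iprodB_of_mem (Finset.mem_insert_self i s), iprodB_of_mem (Finset.mem_insert_self i (v \ s)),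
    iprodB_of_notMem hivs]
  by_cases hsp : (insert i s).card = p
  · have hswap : (signMerge {i} s * signMerge s {i} : 𝕜) = -(-1) ^ p := by
      rw [signMerge_mul_swap (Finset.disjoint_singleton_left.2 his), Finset.card_singleton,
        one_mul, ← hsp, Finset.card_insert_of_notMem his, pow_succ, mul_neg_one, neg_neg]
    rw [Finset.insert_eq i s, Finset.insert_eq i (v \ s),
      signMerge_union_left (Finset.disjoint_singleton_left.2 his),
      signMerge_union_right (Finset.disjoint_singleton_left.2 hivs)]
    linear_combination
      (signMerge s (v \ s) * α ({i} ∪ s) * β ({i} ∪ v \ s) : 𝕜) * hswap +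
      ((-1) ^ p * signMerge s (v \ s) * α ({i} ∪ s) * β ({i} ∪ v \ s) : 𝕜) *
        signMerge_mul_self (𝕜 := 𝕜) {i} (v \ s)
  · rw [hα _ hsp]
    ring

lemma iprodB_wedge {p : ℕ} {α : Form 𝕜 n} (hα : isGrade p α) (β : Form 𝕜 n) (i : Fin n) :
    iprodB i (wedge α β) = wedge (iprodB i α) β + (-1 : 𝕜) ^ p • wedge α (iprodB i β) := by
  funext u
  rw [Pi.add_apply, Pi.smul_apply, smul_eq_mul]
  by_cases hi : i ∈ u
  · rw [iprodB_of_mem hi, wedge_iprodB_cancel_of_mem hα β hi]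
  · exact iprodB_wedge_of_notMem hα β hi

lemma hstar_smul (c : 𝕜) (α : Form 𝕜 n) : hstar (c • α) = c • hstar α := by
  funext s
  simp only [hstar, Pi.smul_apply, smul_eq_mul, mul_left_comm c]

lemma hstar_sum {ι : Type*} (s : Finset ι) (α : ι → Form 𝕜 n) :
    hstar (∑ i ∈ s, α i) = ∑ i ∈ s, hstar (α i) := by
  funext t
  simp only [hstar, Finset.sum_apply, Finset.mul_sum]

lemma isGrade_hstar {p q : ℕ} (h : p + q = n) {α : Form 𝕜 n} (hα : isGrade p α) :
    isGrade q (hstar α) := fun s hs => by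
  have hcard := Finset.card_add_card_compl s
  rw [Fintype.card_fin] at hcard
  rw [hstar, hα _ (by omega), mul_zero]

lemma inner'_smul_left (c : 𝕜) (α β : Form 𝕜 n) : inner' (c • α) β = c * inner' α β := by
  simp only [inner', Pi.smul_apply, smul_eq_mul, Finset.mul_sum, mul_assoc]

lemma inner'_add_left (α β γ : Form 𝕜 n) : inner' (α + β) γ = inner' α γ + inner' β γ := by
  simp only [inner', Pi.add_apply, add_mul, Finset.sum_add_distrib]

lemma inner'_sum_left {ι : Type*} (s : Finset ι) (α : ι → Form 𝕜 n) (β : Form 𝕜 n) :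
    inner' (∑ i ∈ s, α i) β = ∑ i ∈ s, inner' (α i) β := by
  simp only [inner', Finset.sum_apply, Finset.sum_mul]
  exact Finset.sum_comm

lemma inner'_comm (α β : Form 𝕜 n) : inner' α β = inner' β α :=
  Finset.sum_congr rfl fun _ _ => mul_comm _ _

lemma inner'_hstar_left (α β : Form 𝕜 n) :
    inner' (hstar α) β = wedge α β Finset.univ := by
  simp only [inner', hstar, wedge, Finset.powerset_univ, ← Finset.compl_eq_univ_sdiff]
  exact Fintype.sum_equiv (Function.Involutive.toPerm compl compl_involutive) _ _ fun s => by
    simp only [Function.Involutive.coe_toPerm, compl_compl]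

/-! ### Basis covectors and 2-forms -/

lemma wedge_single_right (α : Form 𝕜 n) (t : Finset (Fin n)) (b : 𝕜) (u : Finset (Fin n)) :
    wedge α (Pi.single t b) u =
      if t ⊆ u then signMerge (u \ t) t * α (u \ t) * b else 0 := by
  unfold wedge
  split_ifs with htu
  · rw [Finset.sum_eq_single (u \ t), Finset.sdiff_sdiff_eq_self htu, Pi.single_eq_same]
    · intro s hs hne
      rw [Pi.single_eq_of_ne, mul_zero]
      rintro rfl
      exact hne (Finset.sdiff_sdiff_eq_self (Finset.mem_powerset.1 hs)).symm
    · exact fun h => absurd (Finset.mem_powerset.2 Finset.sdiff_subset) h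
  · refine Finset.sum_eq_zero fun s _ => ?_
    rw [Pi.single_eq_of_ne, mul_zero]
    rintro rfl
    exact htu Finset.sdiff_subset

lemma wedge_single_single (s t : Finset (Fin n)) (a b : 𝕜) :
    wedge (Pi.single s a : Form 𝕜 n) (Pi.single t b) =
      if Disjoint s t then Pi.single (s ∪ t) (signMerge s t * a * b) else 0 := by
  funext u
  rw [wedge_single_right]
  by_cases hsu : t ⊆ u ∧ u \ t = s
  · obtain ⟨htu, rfl⟩ := hsu
    rw [if_pos htu, if_pos Finset.sdiff_disjoint, Finset.sdiff_union_of_subset htu,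
      Pi.single_eq_same, Pi.single_eq_same]
  · have hl : (if t ⊆ u then signMerge (u \ t) t * (Pi.single s a : Form 𝕜 n) (u \ t) * b
        else 0) = 0 := by
      split_ifs with htu
      · rw [Pi.single_eq_of_ne fun h => hsu ⟨htu, h⟩, mul_zero, zero_mul]
      · rfl
    rw [hl]
    split_ifs with hd
    · rw [Pi.single_eq_of_ne]
      rintro rfl
      exact hsu ⟨Finset.subset_union_right, Finset.union_sdiff_cancel_right hd⟩
    · rfl

lemma wedge_single_empty_left (c : 𝕜) (β : Form 𝕜 n) :
    wedge (Pi.single ∅ c : Form 𝕜 n) β = c • β := by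
  funext u
  rw [wedge, Finset.sum_eq_single ∅]
  · simp [signMerge]
  · intro s _ hs
    rw [Pi.single_eq_of_ne hs, mul_zero, zero_mul]
  · exact fun h => absurd (Finset.empty_mem_powerset u) h

lemma e1_eq_single (i : Fin n) : (e1 i : Form 𝕜 n) = Pi.single {i} 1 := by
  funext s
  rw [e1, Pi.single_apply]

lemma isGrade_single {s : Finset (Fin n)} {p : ℕ} (hs : s.card = p) (a : 𝕜) :
    isGrade p (Pi.single s a : Form 𝕜 n) := by
  intro t ht
  refine Pi.single_eq_of_ne (M := fun _ => 𝕜) ?_ a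
  rintro rfl
  exact ht hs

lemma isGrade_e1 (i : Fin n) : isGrade 1 (e1 i : Form 𝕜 n) := by
  rw [e1_eq_single]
  exact isGrade_single (Finset.card_singleton i) 1

lemma wedge_e1_e1 (i j : Fin n) : wedge (e1 i) (e1 j) =
    if i < j then (Pi.single {i, j} 1 : Form 𝕜 n)
    else if j < i then -Pi.single {i, j} 1 else 0 := by
  rw [e1_eq_single, e1_eq_single, wedge_single_single]
  rcases lt_trichotomy i j with h | rfl | h
  · simp [h, h.ne, h.not_gt, signMerge_singleton_left, Finset.filter_singleton]
  · simp
  · simp [h, h.ne', h.not_gt, signMerge_singleton_left, Finset.filter_singleton,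
      Pi.single_neg]

lemma iprodB_e1 (i j : Fin n) :
    iprodB i (e1 j : Form 𝕜 n) = Pi.single ∅ (if i = j then 1 else 0) := by
  funext s
  by_cases hs : s = ∅
  · subst hs
    simp [iprodB, e1]
  · rw [Pi.single_eq_of_ne hs]
    by_cases hi : i ∈ s
    · exact iprodB_of_mem hi _
    · rw [iprodB_of_notMem hi, e1, if_neg, mul_zero]
      intro h
      obtain ⟨k, hk⟩ := Finset.nonempty_iff_ne_empty.2 hs
      have hij : i = j := Finset.mem_singleton.1 (h ▸ Finset.mem_insert_self i s)
      have hkj : k = j := Finset.mem_singleton.1 (h ▸ Finset.mem_insert_of_mem hk)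
      exact hi (hij ▸ hkj ▸ hk)

lemma hstar_wedge_e1 (α : Form 𝕜 n) (i : Fin n) :
    hstar (wedge α (e1 i)) = iprodB i (hstar α) := by
  funext t
  rw [hstar, e1_eq_single, wedge_single_right]
  by_cases hi : i ∈ t
  · rw [if_neg (by simpa using hi), mul_zero, iprodB_of_mem hi]
  · have hins : tᶜ \ {i} = (insert i t)ᶜ := by
      rw [Finset.sdiff_singleton_eq_erase, Finset.compl_insert]
    have hc : tᶜ = (insert i t)ᶜ ∪ {i} := by
      rw [← hins, Finset.sdiff_union_of_subset (by simpa using hi)]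
    have hdi : Disjoint (insert i t)ᶜ {i} := by simp
    rw [if_pos (by simpa using hi), hins, iprodB_of_notMem hi, hstar, hc, signMerge_union_left hdi,
      Finset.insert_eq, signMerge_union_right (Finset.disjoint_singleton_left.2 hi)]
    ring

lemma mat2_of_lt {i j : Fin n} (h : i < j) (γ : Form 𝕜 n) : mat2 γ i j = γ {i, j} := if_pos h

lemma mat2_swap (γ : Form 𝕜 n) (i j : Fin n) : mat2 γ j i = -mat2 γ i j := by
  rcases lt_trichotomy i j with h | rfl | h
  · simp [mat2, h, h.not_gt, Finset.pair_comm j i]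
  · simp [mat2]
  · simp [mat2, h, h.not_gt, Finset.pair_comm j i]

lemma inner'_wedge_e1_e1 (i j : Fin n) (γ : Form 𝕜 n) :
    inner' (wedge (e1 i) (e1 j)) γ = mat2 γ i j := by
  rw [wedge_e1_e1, mat2, Matrix.of_apply]
  split_ifs <;> simp [inner', Pi.single_apply]

lemma iprodB_eq_sum_mat2 {γ : Form 𝕜 n} (hγ : isGrade 2 γ) (i : Fin n) :
    iprodB i γ = ∑ j, mat2 γ i j • e1 j := by
  funext s
  simp only [Finset.sum_apply, Pi.smul_apply, smul_eq_mul, e1, mul_ite, mul_one, mul_zero]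
  by_cases hs : s.card = 1
  · obtain ⟨k, rfl⟩ := Finset.card_eq_one.1 hs
    simp only [Finset.singleton_inj, Finset.sum_ite_eq, Finset.mem_univ, if_true]
    rcases lt_trichotomy i k with h | rfl | h
    · simp [iprodB, mat2, h, h.ne, h.not_gt, Finset.filter_singleton]
    · simp [iprodB, mat2]
    · simp [iprodB, mat2, h, h.ne', h.not_gt, Finset.filter_singleton]
  · rw [Finset.sum_eq_zero fun j _ => if_neg fun h => hs (by rw [h, Finset.card_singleton])]
    by_cases hi : i ∈ s
    · exact iprodB_of_mem hi γ
    · rw [iprodB_of_notMem hi, hγ _ (by rw [Finset.card_insert_of_notMem hi]; omega), mul_zero]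

lemma wedge_e1_iprodB_apply (i : Fin n) (α : Form 𝕜 n) (s : Finset (Fin n)) :
    wedge (e1 i) (iprodB i α) s = if i ∈ s then α s else 0 := by
  unfold wedge
  split_ifs with hi
  · rw [Finset.sum_eq_single {i}, iprodB_of_notMem (by simp), e1, if_pos rfl, mul_one, ← mul_assoc,
      signMerge_mul_self, one_mul, Finset.sdiff_singleton_eq_erase, Finset.insert_erase hi]
    · intro t _ ht
      rw [e1, if_neg ht, mul_zero, zero_mul]
    · simp [hi]
  · refine Finset.sum_eq_zero fun t ht => ?_
    rw [e1, if_neg, mul_zero, zero_mul]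
    rintro rfl
    exact hi (Finset.singleton_subset_iff.1 (Finset.mem_powerset.1 ht))

lemma sum_wedge_e1_iprodB {p : ℕ} {α : Form 𝕜 n} (hα : isGrade p α) :
    ∑ i, wedge (e1 i) (iprodB i α) = (p : 𝕜) • α := by
  funext s
  simp only [Finset.sum_apply, wedge_e1_iprodB_apply, Finset.sum_ite_mem, Finset.univ_inter,
    Finset.sum_const, nsmul_eq_mul, Pi.smul_apply, smul_eq_mul]
  by_cases hs : s.card = p
  · rw [hs]
  · rw [hα s hs, mul_zero, mul_zero]

lemma sum_mat2_smul_wedge_e1_e1 {γ : Form 𝕜 n} (hγ : isGrade 2 γ) :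
    ∑ i, ∑ j, mat2 γ i j • wedge (e1 i) (e1 j) = (2 : 𝕜) • γ := by
  simp only [← wedge_smul_right, ← wedge_sum_right, ← iprodB_eq_sum_mat2 hγ]
  exact_mod_cast sum_wedge_e1_iprodB hγ

lemma sum_mat2_mul_mat2 {α : Form 𝕜 n} (hα : isGrade 2 α) (β : Form 𝕜 n) :
    ∑ i, ∑ j, mat2 α i j * mat2 β i j = 2 * inner' α β := by
  rw [← inner'_smul_left, ← sum_mat2_smul_wedge_e1_e1 hα]
  simp only [inner'_sum_left, inner'_smul_left, inner'_wedge_e1_e1]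

lemma ext_of_mat2 {α β : Form 𝕜 n} (hα : isGrade 2 α) (hβ : isGrade 2 β)
    (h : ∀ i j, mat2 α i j = mat2 β i j) : α = β := by
  funext s
  by_cases hs : s.card = 2
  · obtain ⟨i, j, hij, rfl⟩ := Finset.card_eq_two.1 hs
    rcases lt_or_gt_of_ne hij with hlt | hlt
    · rw [← mat2_of_lt hlt α, ← mat2_of_lt hlt β, h]
    · rw [Finset.pair_comm, ← mat2_of_lt hlt α, ← mat2_of_lt hlt β, h]
  · rw [hα s hs, hβ s hs]

lemma det_orderIsoOfFin_pair {i j : Fin n} (hij : i < j) (hc : ({i, j} : Finset (Fin n)).card = 2)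
    (v w : Fin n → 𝕜) :
    (Matrix.of fun a b => (![v, w] : Fin 2 → Fin n → 𝕜) a
      (({i, j} : Finset (Fin n)).orderIsoOfFin hc b)).det = v i * w j - v j * w i := by
  have hord : ![i, j] = ({i, j} : Finset (Fin n)).orderEmbOfFin hc := by
    refine Finset.orderEmbOfFin_unique hc (fun a => ?_) ?_
    · fin_cases a <;> simp
    · rw [Fin.strictMono_iff_lt_succ]
      intro a
      fin_cases a
      exact hij
  have hi : (({i, j} : Finset (Fin n)).orderIsoOfFin hc 0 : Fin n) = i := (congrFun hord 0).symm
  have hj : (({i, j} : Finset (Fin n)).orderIsoOfFin hc 1 : Fin n) = j := (congrFun hord 1).symm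
  rw [Matrix.det_fin_two]
  simp only [Matrix.of_apply, Matrix.cons_val_zero, Matrix.cons_val_one, hi, hj]

lemma evalForm_single_single (γ : Form 𝕜 n) (i j : Fin n) (a b : 𝕜) :
    evalForm γ ![Pi.single i a, Pi.single j b] = a * b * mat2 γ i j := by
  have hterm (s : Finset (Fin n)) : (γ s * if h : s.card = 2 then (Matrix.of fun k l =>
      (![Pi.single i a, Pi.single j b] : Fin 2 → Fin n → 𝕜) k (s.orderIsoOfFin h l)).det else 0) =
      a * b * mat2 (Pi.single s (γ s)) i j := by
    split_ifs with hs
    · obtain ⟨x, y, hxy, rfl⟩ : ∃ x y, x < y ∧ s = {x, y} := by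
        obtain ⟨x, y, hxy, rfl⟩ := Finset.card_eq_two.1 hs
        rcases lt_or_gt_of_ne hxy with h | h
        exacts [⟨x, y, h, rfl⟩, ⟨y, x, h, Finset.pair_comm x y⟩]
      rw [det_orderIsoOfFin_pair hxy]
      simp only [mat2, Matrix.of_apply, Pi.single_apply, ← Finset.coe_inj,
        Finset.coe_pair, Set.pair_eq_pair_iff]
      grind
    · simp only [mat2, Matrix.of_apply, Pi.single_apply]
      grind
  simp only [evalForm, hterm, ← Finset.mul_sum]
  congr 1
  simp only [mat2, Matrix.of_apply]
  split_ifs <;> simp [Finset.sum_pi_single]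

/-! ### Pullback by monomial maps -/

/-- The sign of `σ` as a reordering of the indices in `s`: for `s` increasingly enumerated,
`e^{σ s₁} ∧ e^{σ s₂} ∧ ⋯ = orderSign σ s • e^{σ s}`. -/
def orderSign (σ : Equiv.Perm (Fin n)) (s : Finset (Fin n)) : 𝕜 :=
  (-1) ^ ((s ×ˢ s).filter fun p => p.1 < p.2 ∧ σ p.2 < σ p.1).card

/-- The pullback of forms under the monomial linear map `e_i ↦ δ i • e_{σ i}`. -/
def monomialPullback (σ : Equiv.Perm (Fin n)) (δ : Fin n → 𝕜) (α : Form 𝕜 n) : Form 𝕜 n :=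
  fun s => orderSign σ s * (∏ i ∈ s, δ i) * α (s.map σ.toEmbedding)

lemma orderSign_eq_prod (σ : Equiv.Perm (Fin n)) (s : Finset (Fin n)) :
    (orderSign σ s : 𝕜) = ∏ i ∈ s, ∏ j ∈ s, if i < j ∧ σ j < σ i then -1 else 1 := by
  rw [← Finset.prod_product', Finset.prod_ite, Finset.prod_const, Finset.prod_const_one, mul_one,
    orderSign]

lemma orderSign_mul_self (σ : Equiv.Perm (Fin n)) (s : Finset (Fin n)) :
    (orderSign σ s : 𝕜) * orderSign σ s = 1 := by
  rw [orderSign, ← mul_pow, neg_one_mul, neg_neg, one_pow]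

lemma orderSign_union_mul_signMerge_map (σ : Equiv.Perm (Fin n)) {s t : Finset (Fin n)}
    (h : Disjoint s t) :
    (orderSign σ (s ∪ t) * signMerge (s.map σ.toEmbedding) (t.map σ.toEmbedding) : 𝕜) =
      orderSign σ s * orderSign σ t * signMerge s t := by
  have hcross : ((∏ i ∈ s, ∏ j ∈ t, if i < j ∧ σ j < σ i then -1 else 1) *
      (∏ i ∈ t, ∏ j ∈ s, if i < j ∧ σ j < σ i then -1 else 1) *
      ∏ i ∈ s, ∏ j ∈ t, if σ j < σ i then -1 else 1 : 𝕜) =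
      ∏ i ∈ s, ∏ j ∈ t, if j < i then -1 else 1 := by
    rw [Finset.prod_comm (s := t)]
    simp only [← Finset.prod_mul_distrib]
    refine Finset.prod_congr rfl fun i hi => Finset.prod_congr rfl fun j hj => ?_
    have hij : i ≠ j := Finset.disjoint_iff_ne.1 h i hi j hj
    have hσ : σ i ≠ σ j := σ.injective.ne hij
    rcases lt_or_gt_of_ne hij with h₁ | h₁ <;> rcases lt_or_gt_of_ne hσ with h₂ | h₂ <;>
      simp [h₁, h₂, h₁.not_gt, h₂.not_gt]
  simp only [orderSign_eq_prod, signMerge_eq_prod, Finset.prod_map, Equiv.coe_toEmbedding,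
    Finset.prod_union h, Finset.prod_mul_distrib] at hcross ⊢
  rw [← hcross]
  ring

lemma monomialPullback_add (σ : Equiv.Perm (Fin n)) (δ : Fin n → 𝕜) (α β : Form 𝕜 n) :
    monomialPullback σ δ (α + β) = monomialPullback σ δ α + monomialPullback σ δ β := by
  funext s
  simp only [monomialPullback, Pi.add_apply, mul_add]

lemma monomialPullback_smul (σ : Equiv.Perm (Fin n)) (δ : Fin n → 𝕜) (c : 𝕜) (α : Form 𝕜 n) :
    monomialPullback σ δ (c • α) = c • monomialPullback σ δ α := by
  funext s
  simp only [monomialPullback, Pi.smul_apply, smul_eq_mul, mul_left_comm c]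

lemma monomialPullback_wedge (σ : Equiv.Perm (Fin n)) (δ : Fin n → 𝕜) (α β : Form 𝕜 n) :
    monomialPullback σ δ (wedge α β) =
      wedge (monomialPullback σ δ α) (monomialPullback σ δ β) := by
  funext u
  simp only [monomialPullback, wedge, Finset.mul_sum]
  refine (Finset.sum_nbij (·.map σ.toEmbedding) (fun s hs => ?_)
    (Finset.map_injective _).injOn (fun s hs => ?_) fun s hs => ?_).symm
  · exact Finset.mem_powerset.2 (Finset.map_subset_map.2 (Finset.mem_powerset.1 hs))
  · obtain ⟨t, ht, rfl⟩ := Finset.subset_map_iff.1 (Finset.mem_powerset.1 hs)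
    exact ⟨t, Finset.mem_powerset.2 ht, rfl⟩
  · have hsu : s ⊆ u := Finset.mem_powerset.1 hs
    have hsign := orderSign_union_mul_signMerge_map (𝕜 := 𝕜) σ
      (Finset.disjoint_sdiff (s := s) (t := u))
    rw [Finset.union_sdiff_of_subset hsu, Finset.map_sdiff] at hsign
    rw [Finset.map_sdiff, ← Finset.prod_sdiff hsu]
    linear_combination (-(∏ i ∈ u \ s, δ i) * (∏ i ∈ s, δ i) * α (s.map σ.toEmbedding) *
      β (u.map σ.toEmbedding \ s.map σ.toEmbedding)) * hsign

lemma monomialPullback_hstar {σ : Equiv.Perm (Fin n)} {δ : Fin n → 𝕜} (hδ : ∀ i, δ i * δ i = 1)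
    (hdet : orderSign σ Finset.univ * ∏ i, δ i = 1) (α : Form 𝕜 n) :
    monomialPullback σ δ (hstar α) = hstar (monomialPullback σ δ α) := by
  funext t
  have hmap : (t.map σ.toEmbedding)ᶜ = tᶜ.map σ.toEmbedding := by
    ext i
    simp [Finset.mem_map_equiv]
  have hsign := orderSign_union_mul_signMerge_map (𝕜 := 𝕜) σ (disjoint_compl_left (a := t))
  rw [Finset.union_comm, Finset.union_compl] at hsign
  have hprod : (∏ i ∈ t, δ i) * ∏ i ∈ t, δ i = 1 := by
    rw [← Finset.prod_mul_distrib, Finset.prod_congr rfl fun i _ => hδ i, Finset.prod_const_one]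
  have hone := orderSign_mul_self (𝕜 := 𝕜) σ t
  rw [← Finset.prod_compl_mul_prod t] at hdet
  simp only [monomialPullback, hstar, hmap]
  set a := α (tᶜ.map σ.toEmbedding)
  set O : 𝕜 := orderSign σ t
  set P := ∏ i ∈ t, δ i
  set P' := ∏ i ∈ tᶜ, δ i
  set S' : 𝕜 := signMerge (tᶜ.map σ.toEmbedding) (t.map σ.toEmbedding)
  linear_combination -(S' * O * P * a) * hdet + S' * O * orderSign σ Finset.univ * P' * a * hprod +
    O * P' * a * hsign + orderSign σ tᶜ * signMerge tᶜ t * P' * a * hone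

lemma isGrade_monomialPullback (σ : Equiv.Perm (Fin n)) (δ : Fin n → 𝕜) {p : ℕ} {α : Form 𝕜 n}
    (hα : isGrade p α) : isGrade p (monomialPullback σ δ α) := fun s hs => by
  rw [monomialPullback, hα _ (by rwa [Finset.card_map]), mul_zero]

lemma orderSign_pair (σ : Equiv.Perm (Fin n)) {i j : Fin n} (h : i < j) :
    (orderSign σ {i, j} : 𝕜) = if σ j < σ i then -1 else 1 := by
  simp [orderSign_eq_prod, Finset.prod_pair h.ne, h, h.not_gt]

lemma mat2_monomialPullback (σ : Equiv.Perm (Fin n)) (δ : Fin n → 𝕜) (α : Form 𝕜 n)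
    (i j : Fin n) :
    mat2 (monomialPullback σ δ α) i j = δ i * δ j * mat2 α (σ i) (σ j) := by
  have hlt {i j : Fin n} (h : i < j) :
      mat2 (monomialPullback σ δ α) i j = δ i * δ j * mat2 α (σ i) (σ j) := by
    have hσ : σ i ≠ σ j := σ.injective.ne h.ne
    rw [mat2_of_lt h, monomialPullback, orderSign_pair σ h, Finset.prod_pair h.ne,
      Finset.map_insert, Finset.map_singleton]
    rcases lt_or_gt_of_ne hσ with h' | h' <;> simp [mat2, h', h'.not_gt]
  rcases lt_trichotomy i j with h | rfl | h
  · exact hlt h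
  · simp [mat2]
  · rw [mat2_swap, hlt h, mat2_swap α (σ i)]
    ring

/- The forms `Ω` and its conjugate satisfy `hΨ` with `c = ±√-1`. Substituting `σ` for the indices in
`α ∧ Ψ = ½ ∑ α_ij e^i ∧ e^j ∧ Ψ` then produces the factor `c² = -1`. -/
lemma wedge_eq_zero_of_monomialPullback_eq_self [CharZero 𝕜] {σ : Equiv.Perm (Fin n)}
    {δ : Fin n → 𝕜} {c : 𝕜} (hc : c * c = -1) {α Ψ : Form 𝕜 n} (hα : isGrade 2 α)
    (hinv : monomialPullback σ δ α = α)
    (hΨ : ∀ i, wedge (e1 (σ i)) Ψ = (c * δ i) • wedge (e1 i) Ψ) : wedge α Ψ = 0 := by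
  have hmat (i j : Fin n) : mat2 α i j = δ i * δ j * mat2 α (σ i) (σ j) := by
    rw [← mat2_monomialPullback, hinv]
  have hterm (i j : Fin n) :
      mat2 α (σ i) (σ j) • wedge (e1 (σ i)) (wedge (e1 (σ j)) Ψ) =
        -(mat2 α i j • wedge (e1 i) (wedge (e1 j) Ψ)) := by
    rw [hΨ, wedge_smul_right, wedge_left_anticomm (isGrade_e1 _) (isGrade_e1 _), hΨ,
      wedge_smul_right, wedge_left_anticomm (isGrade_e1 _) (isGrade_e1 _), hmat i j]
    match_scalars
    linear_combination (δ i * δ j * mat2 α (σ i) (σ j)) * hc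
  have hexpand : (2 : 𝕜) • wedge α Ψ =
      ∑ i, ∑ j, mat2 α i j • wedge (e1 i) (wedge (e1 j) Ψ) := by
    simp only [← wedge_smul_left, ← sum_mat2_smul_wedge_e1_e1 hα, wedge_sum_left, wedge_assoc]
  have hneg : (2 : 𝕜) • wedge α Ψ = -((2 : 𝕜) • wedge α Ψ) := by
    conv_lhs => rw [hexpand, ← Equiv.sum_comp σ]
    simp only [← Equiv.sum_comp σ (fun j => mat2 α (σ _) j • _), hterm, Finset.sum_neg_distrib,
      hexpand]
  exact (smul_eq_zero.1 (self_eq_neg.1 hneg)).resolve_left two_ne_zero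

/-! ### The complex structure and `Re Ω` -/

/-- The permutation `σ` of the coordinate indices underlying the complex structure, so that
`J e_i = Jsign i • e_{σ i}`. -/
def Jperm : Equiv.Perm (Fin 8) :=
  Equiv.swap 0 1 * Equiv.swap 2 3 * Equiv.swap 4 5 * Equiv.swap 6 7

/-- The signs of the complex structure: `J e_{2k} = e_{2k+1}` and `J e_{2k+1} = -e_{2k}`. -/
def Jsign (i : Fin 8) : ℂ := if i < Jperm i then 1 else -1

/-- `J^* α = α`, where `α` is extended `ℂ`-multilinearly; for 2-forms this is type `(1,1)`. -/
def IsJInvariant (α : Form ℂ 8) : Prop := monomialPullback Jperm Jsign α = α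

lemma Jperm_Jperm (i : Fin 8) : Jperm (Jperm i) = i := by
  revert i
  decide

lemma Jperm_ne (i : Fin 8) : Jperm i ≠ i := by
  revert i
  decide

lemma Jperm_zr (k : Fin 4) : Jperm (zr k) = zi k := by
  revert k
  decide

lemma Jperm_zi (k : Fin 4) : Jperm (zi k) = zr k := by
  rw [← Jperm_zr, Jperm_Jperm]

lemma Jsign_zr (k : Fin 4) : Jsign (zr k) = 1 :=
  if_pos (by revert k; decide)

lemma Jsign_zi (k : Fin 4) : Jsign (zi k) = -1 :=
  if_neg (by revert k; decide)

lemma exists_zr_or_zi (i : Fin 8) : ∃ k, i = zr k ∨ i = zi k := by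
  revert i
  decide

lemma Jsign_mul_self (i : Fin 8) : Jsign i * Jsign i = 1 := by
  unfold Jsign
  split_ifs <;> norm_num

lemma Jsign_Jperm (i : Fin 8) : Jsign (Jperm i) = -Jsign i := by
  obtain ⟨k, rfl | rfl⟩ := exists_zr_or_zi i
  · rw [Jperm_zr, Jsign_zi, Jsign_zr]
  · rw [Jperm_zi, Jsign_zi, Jsign_zr, neg_neg]

lemma orderSign_Jperm_mul_prod_Jsign :
    orderSign Jperm Finset.univ * ∏ i, Jsign i = 1 := by
  have hsign : (orderSign Jperm Finset.univ : ℂ) = 1 := Even.neg_one_pow (by decide)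
  have hprod : ∏ i, Jsign i = (-1) ^ (Finset.univ.filter fun i => ¬ i < Jperm i).card := by
    simp only [Jsign, Finset.prod_ite, Finset.prod_const, one_pow, one_mul]
  rw [hsign, hprod, one_mul]
  exact Even.neg_one_pow (by decide)

lemma Jv_apply (v : Fin 8 → ℂ) (i : Fin 8) : Jv v i = -Jsign i * v (Jperm i) := by
  obtain ⟨k, rfl | rfl⟩ := exists_zr_or_zi i
  · rw [Jsign_zr, Jperm_zr, neg_one_mul]
    exact dif_pos (by simp [zr])
  · rw [Jsign_zi, Jperm_zi, neg_neg, one_mul]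
    exact dif_neg (by simp [zi])

lemma Jv_single (i : Fin 8) : Jv (Pi.single i 1) = Pi.single (Jperm i) (Jsign i) := by
  funext k
  rw [Jv_apply]
  by_cases hk : k = Jperm i
  · rw [hk, Jperm_Jperm, Pi.single_eq_same, Pi.single_eq_same, Jsign_Jperm, neg_neg, mul_one]
  · have hki : Jperm k ≠ i := fun h => hk (by rw [← h, Jperm_Jperm])
    rw [Pi.single_eq_of_ne hk, Pi.single_eq_of_ne hki, mul_zero]

lemma IsJInvariant.mat2_Jperm {α : Form ℂ 8} (hα : IsJInvariant α) (i j : Fin 8) :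
    Jsign i * Jsign j * mat2 α (Jperm i) (Jperm j) = mat2 α i j := by
  rw [← mat2_monomialPullback, hα]

lemma isJInvariant_of_mat2_Jperm {α : Form ℂ 8} (h2 : isGrade 2 α)
    (h : ∀ i j, Jsign i * Jsign j * mat2 α (Jperm i) (Jperm j) = mat2 α i j) : IsJInvariant α :=
  ext_of_mat2 (isGrade_monomialPullback _ _ h2) h2 fun i j => by
    rw [mat2_monomialPullback, h]

lemma isJInvariant_of_evalForm {α : Form ℂ 8} (h2 : isGrade 2 α)
    (hJ : ∀ v w : Fin 8 → ℂ, evalForm α ![Jv v, Jv w] = evalForm α ![v, w]) : IsJInvariant α := by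
  refine isJInvariant_of_mat2_Jperm h2 fun i j => ?_
  rw [← evalForm_single_single, ← Jv_single, ← Jv_single, hJ, evalForm_single_single, one_mul,
    one_mul]

lemma IsJInvariant.add {α β : Form ℂ 8} (hα : IsJInvariant α) (hβ : IsJInvariant β) :
    IsJInvariant (α + β) := by
  rw [IsJInvariant, monomialPullback_add, hα, hβ]

lemma IsJInvariant.smul {α : Form ℂ 8} (hα : IsJInvariant α) (c : ℂ) : IsJInvariant (c • α) := by
  rw [IsJInvariant, monomialPullback_smul, hα]

lemma IsJInvariant.wedge {α β : Form ℂ 8} (hα : IsJInvariant α) (hβ : IsJInvariant β) :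
    IsJInvariant (wedge α β) := by
  rw [IsJInvariant, monomialPullback_wedge, hα, hβ]

lemma IsJInvariant.hstar {α : Form ℂ 8} (hα : IsJInvariant α) : IsJInvariant (hstar α) := by
  rw [IsJInvariant, monomialPullback_hstar Jsign_mul_self orderSign_Jperm_mul_prod_Jsign, hα]

lemma isGrade_dzf (k : Fin 4) : isGrade 1 (dzf k) :=
  isGrade_add (isGrade_e1 _) (isGrade_smul _ (isGrade_e1 _))

lemma wedge_dzf_OmegaCY (k : Fin 4) : wedge (dzf k) OmegaCY = 0 := by
  have hcomm (k l : Fin 4) (γ : Form ℂ 8) :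
      wedge (dzf k) (wedge (dzf l) γ) = -wedge (dzf l) (wedge (dzf k) γ) :=
    wedge_left_anticomm (isGrade_dzf k) (isGrade_dzf l) γ
  have hself (k : Fin 4) : wedge (dzf k) (dzf k) = 0 := wedge_self_eq_zero (isGrade_dzf k)
  have hzero (k : Fin 4) (γ : Form ℂ 8) : wedge (dzf k) (wedge (dzf k) γ) = 0 :=
    wedge_wedge_self_eq_zero (isGrade_dzf k) γ
  unfold OmegaCY
  match k with
  | 0 => rw [hzero]
  | 1 => rw [hcomm 1 0, hzero, wedge_zero, neg_zero]
  | 2 => simp only [hcomm 2 0, hcomm 2 1, hzero, wedge_zero, neg_zero]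
  | 3 => simp only [hcomm 3 0, hcomm 3 1, hcomm 3 2, hself, wedge_zero, neg_zero]

lemma wedge_e1_zi_OmegaCY (k : Fin 4) :
    wedge (e1 (zi k)) OmegaCY = Complex.I • wedge (e1 (zr k)) OmegaCY := by
  have h := congrArg (Complex.I • ·) (wedge_dzf_OmegaCY k)
  simp only [dzf, wedge_add_left, wedge_smul_left, smul_add, smul_smul, Complex.I_mul_I, smul_zero,
    neg_one_smul, add_neg_eq_zero] at h
  exact h.symm

lemma wedge_e1_Jperm_OmegaCY (i : Fin 8) :
    wedge (e1 (Jperm i)) OmegaCY = (Complex.I * Jsign i) • wedge (e1 i) OmegaCY := by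
  obtain ⟨k, rfl | rfl⟩ := exists_zr_or_zi i
  · rw [Jperm_zr, Jsign_zr, mul_one, wedge_e1_zi_OmegaCY]
  · rw [Jperm_zi, Jsign_zi, wedge_e1_zi_OmegaCY, smul_smul, mul_neg_one, neg_mul, Complex.I_mul_I,
      neg_neg, one_smul]

lemma star_wedge (α β : Form ℂ n) : star (wedge α β) = wedge (star α) (star β) := by
  funext u
  simp [wedge, signMerge, Pi.star_apply]

lemma star_e1 (i : Fin n) : star (e1 i : Form ℂ n) = e1 i := by
  funext s
  simp [e1, Pi.star_apply, apply_ite]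

lemma wedge_e1_Jperm_star_OmegaCY (i : Fin 8) :
    wedge (e1 (Jperm i)) (star OmegaCY) = (-Complex.I * Jsign i) • wedge (e1 i) (star OmegaCY) := by
  have hreal : star (Jsign i) = Jsign i := by
    unfold Jsign
    split_ifs <;> simp
  rw [← star_e1, ← star_wedge, wedge_e1_Jperm_OmegaCY, star_smul, star_wedge, star_e1, star_mul',
    hreal]
  simp

lemma ReOmegaCY_eq_add_star : ReOmegaCY = (2 : ℂ)⁻¹ • (OmegaCY + star OmegaCY) := by
  funext s
  simp [ReOmegaCY, Complex.re_eq_add_conj, div_eq_inv_mul]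

lemma wedge_ReOmegaCY_eq_zero {α : Form ℂ 8} (h2 : isGrade 2 α) (hα : IsJInvariant α) :
    wedge α ReOmegaCY = 0 := by
  rw [ReOmegaCY_eq_add_star, wedge_smul_right, wedge_add_right,
    wedge_eq_zero_of_monomialPullback_eq_self Complex.I_mul_I h2 hα wedge_e1_Jperm_OmegaCY,
    wedge_eq_zero_of_monomialPullback_eq_self (by simp) h2 hα wedge_e1_Jperm_star_OmegaCY,
    add_zero, smul_zero]

/-! ### The Kähler form -/

lemma omegaCY_pair (i j : Fin 8) : omegaCY {i, j} = if j = Jperm i then 1 else 0 := by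
  have hblock : ∀ i j : Fin 8, (({i, j} : Finset (Fin 8)) = {0, 1} ∨ ({i, j} : Finset _) = {2, 3} ∨
      ({i, j} : Finset _) = {4, 5} ∨ ({i, j} : Finset _) = {6, 7}) ↔ j = Jperm i := by decide
  simp only [omegaCY, ← ite_or, hblock]

lemma isGrade_omegaCY : isGrade 2 omegaCY := by
  intro s hs
  simp only [omegaCY, ← ite_or]
  rw [if_neg]
  rintro (rfl | rfl | rfl | rfl) <;> exact hs rfl

lemma mat2_omegaCY (i j : Fin 8) : mat2 omegaCY i j = if j = Jperm i then Jsign i else 0 := by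
  rw [mat2, Matrix.of_apply, omegaCY_pair]
  by_cases hj : j = Jperm i
  · subst hj
    rcases lt_or_gt_of_ne (Jperm_ne i).symm with h | h <;> simp [Jsign, h, h.not_gt]
  · simp [hj]

lemma isJInvariant_omegaCY : IsJInvariant omegaCY := by
  refine isJInvariant_of_mat2_Jperm isGrade_omegaCY fun i j => ?_
  rw [mat2_omegaCY, mat2_omegaCY]
  simp only [Jperm.injective.eq_iff]
  split_ifs with hj
  · rw [hj, Jsign_Jperm]
    linear_combination Jsign i * Jsign_mul_self i
  · rw [mul_zero]

lemma iprodB_omegaCY (i : Fin 8) : iprodB i omegaCY = Jsign i • e1 (Jperm i) := by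
  simp [iprodB_eq_sum_mat2 isGrade_omegaCY, mat2_omegaCY]

/-- The index set of the real and imaginary part of the coordinate `z^k`. -/
def coordPair (k : Fin 4) : Finset (Fin 8) := {zr k, zi k}

lemma coordPair_injective : Function.Injective coordPair := by
  unfold Function.Injective
  decide

lemma omegaCY_eq_sum_single : omegaCY = ∑ k, Pi.single (coordPair k) 1 := by
  funext s
  rw [Finset.sum_apply]
  by_cases h : ∃ k, s = coordPair k
  · obtain ⟨k, rfl⟩ := h
    rw [Fintype.sum_eq_single k fun l hl => Pi.single_eq_of_ne (coordPair_injective.ne hl.symm) _,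
      Pi.single_eq_same, coordPair, omegaCY_pair, if_pos (Jperm_zr k).symm]
  · push Not at h
    rw [Finset.sum_eq_zero fun k _ => Pi.single_eq_of_ne (h k) _]
    exact (if_neg (h 0)).trans <| (if_neg (h 1)).trans <| (if_neg (h 2)).trans (if_neg (h 3))

lemma wedge_omegaCY_omegaCY_apply (u : Finset (Fin 8)) :
    wedge omegaCY omegaCY u = (Finset.univ.filter fun p : Fin 4 × Fin 4 =>
      p.1 ≠ p.2 ∧ coordPair p.1 ∪ coordPair p.2 = u).card := by
  have hdisj : ∀ k l, Disjoint (coordPair k) (coordPair l) ↔ k ≠ l := by decide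
  have hsign (k l : Fin 4) (hkl : k ≠ l) : (signMerge (coordPair k) (coordPair l) : ℂ) = 1 :=
    Even.neg_one_pow (by revert k l; decide)
  rw [Finset.natCast_card_filter, Fintype.sum_prod_type]
  simp only [omegaCY_eq_sum_single, wedge_sum_left, wedge_sum_right, Finset.sum_apply,
    wedge_single_single, hdisj]
  refine Finset.sum_congr rfl fun k _ => Finset.sum_congr rfl fun l _ => ?_
  by_cases hkl : k = l
  · simp [hkl]
  · rw [if_pos (Ne.symm hkl), hsign l k (Ne.symm hkl), mul_one, mul_one, Pi.single_apply,
      Finset.union_comm]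
    simp [hkl, eq_comm (a := u)]

lemma hstar_wedge_omegaCY_omegaCY :
    hstar (wedge omegaCY omegaCY) = wedge omegaCY omegaCY := by
  have hcompl : ∀ t : Finset (Fin 8),
      (Finset.univ.filter fun p : Fin 4 × Fin 4 =>
        p.1 ≠ p.2 ∧ coordPair p.1 ∪ coordPair p.2 = tᶜ).card =
      (Finset.univ.filter fun p : Fin 4 × Fin 4 =>
        p.1 ≠ p.2 ∧ coordPair p.1 ∪ coordPair p.2 = t).card := by decide +kernel
  have heven : ∀ k l, Even (((coordPair k ∪ coordPair l)ᶜ ×ˢ (coordPair k ∪ coordPair l)).filter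
      fun p => p.2 < p.1).card := by decide
  funext t
  rw [hstar, wedge_omegaCY_omegaCY_apply, wedge_omegaCY_omegaCY_apply, hcompl]
  by_cases ht : ∃ k l, coordPair k ∪ coordPair l = t
  · obtain ⟨k, l, rfl⟩ := ht
    rw [signMerge, (heven k l).neg_one_pow, one_mul]
  · rw [Finset.filter_false_of_mem fun p _ hp => ht ⟨p.1, p.2, hp.2⟩, Finset.card_empty,
      Nat.cast_zero, mul_zero]

lemma iprodB_iprodB_wedge_omegaCY_omegaCY (i j : Fin 8) :
    iprodB j (iprodB i (wedge omegaCY omegaCY)) = (2 : ℂ) • (mat2 omegaCY i j • omegaCY -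
      (Jsign i * Jsign j) • wedge (e1 (Jperm i)) (e1 (Jperm j))) := by
  have hcomm : wedge omegaCY (e1 (Jperm i)) = wedge (e1 (Jperm i)) omegaCY :=
    wedge_comm_of_even even_two isGrade_omegaCY (isGrade_e1 _)
  rw [iprodB_wedge isGrade_omegaCY, iprodB_omegaCY, wedge_smul_left, wedge_smul_right, hcomm,
    neg_one_sq, one_smul, ← two_smul ℂ, iprodB_smul, iprodB_smul, iprodB_wedge (isGrade_e1 _),
    iprodB_e1, wedge_single_empty_left, iprodB_omegaCY, wedge_smul_right, mat2_omegaCY]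
  split_ifs <;> module

lemma hstar_wedge_e1_e1_omegaCY_omegaCY (i j : Fin 8) :
    hstar (wedge (wedge (e1 i) (e1 j)) (wedge omegaCY omegaCY)) =
      (2 : ℂ) • (mat2 omegaCY i j • omegaCY -
        (Jsign i * Jsign j) • wedge (e1 (Jperm i)) (e1 (Jperm j))) := by
  rw [wedge_comm_of_even even_two (isGrade_wedge (isGrade_e1 i) (isGrade_e1 j))
      (isGrade_wedge isGrade_omegaCY isGrade_omegaCY), ← wedge_assoc, hstar_wedge_e1,
    hstar_wedge_e1, hstar_wedge_omegaCY_omegaCY, iprodB_iprodB_wedge_omegaCY_omegaCY]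

lemma inner'_omegaCY_omegaCY : inner' omegaCY omegaCY = 4 := by
  have h : (2 : ℂ) * inner' omegaCY omegaCY = 2 * 4 := by
    rw [← sum_mat2_mul_mat2 isGrade_omegaCY]
    simp only [mat2_omegaCY, mul_ite, ite_mul, zero_mul, mul_zero, Jsign_mul_self]
    norm_num
  exact mul_left_cancel₀ two_ne_zero h

lemma hstar_wedge_omegaCY_sq {α : Form ℂ 8} (h2 : isGrade 2 α) (hα : IsJInvariant α) :
    hstar (wedge α (wedge omegaCY omegaCY)) = (2 : ℂ) • (inner' α omegaCY • omegaCY - α) := by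
  have hJ : ∑ i, ∑ j, (Jsign i * Jsign j * mat2 α i j) • wedge (e1 (Jperm i)) (e1 (Jperm j)) =
      (2 : ℂ) • α := by
    rw [← sum_mat2_smul_wedge_e1_e1 h2, ← Equiv.sum_comp Jperm]
    refine Finset.sum_congr rfl fun i _ => ?_
    rw [← Equiv.sum_comp Jperm]
    refine Finset.sum_congr rfl fun j _ => ?_
    rw [Jsign_Jperm, Jsign_Jperm, neg_mul_neg, hα.mat2_Jperm, Jperm_Jperm, Jperm_Jperm]
  have hω : ∑ i, ∑ j, (mat2 α i j * mat2 omegaCY i j) • omegaCY =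
      (2 * inner' α omegaCY) • omegaCY := by
    simp only [← Finset.sum_smul, sum_mat2_mul_mat2 h2]
  have htwo : (2 : ℂ) • hstar (wedge α (wedge omegaCY omegaCY)) =
      (2 : ℂ) • (2 : ℂ) • (inner' α omegaCY • omegaCY - α) := by
    rw [← hstar_smul, ← wedge_smul_left, ← sum_mat2_smul_wedge_e1_e1 h2]
    simp only [wedge_sum_left, wedge_smul_left, hstar_sum, hstar_smul,
      hstar_wedge_e1_e1_omegaCY_omegaCY]
    have hterm (i j : Fin 8) : mat2 α i j • (2 : ℂ) • (mat2 omegaCY i j • omegaCY -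
        (Jsign i * Jsign j) • wedge (e1 (Jperm i)) (e1 (Jperm j))) =
        (2 : ℂ) • ((mat2 α i j * mat2 omegaCY i j) • omegaCY -
          (Jsign i * Jsign j * mat2 α i j) • wedge (e1 (Jperm i)) (e1 (Jperm j))) := by
      rw [smul_comm, smul_sub, smul_smul, smul_smul, mul_comm (mat2 α i j) (Jsign i * Jsign j)]
    simp only [hterm, ← Finset.smul_sum, Finset.sum_sub_distrib]
    rw [hω, hJ, mul_smul, ← smul_sub]
  exact smul_right_injective (Form ℂ 8) (two_ne_zero' ℂ) htwo

lemma hstar_omegaCY_cubed : hstar (wedge omegaCY (wedge omegaCY omegaCY)) = (6 : ℂ) • omegaCY := by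
  rw [hstar_wedge_omegaCY_sq isGrade_omegaCY isJInvariant_omegaCY, inner'_omegaCY_omegaCY,
    smul_sub, smul_smul, ← sub_smul]
  norm_num

lemma add_hstar_wedge_PhiCY {α : Form ℂ 8} (h2 : isGrade 2 α) (hα : IsJInvariant α) :
    α + hstar (wedge α PhiCY) = inner' α omegaCY • omegaCY := by
  rw [PhiCY, wedge_add_right, wedge_ReOmegaCY_eq_zero h2 hα, add_zero, wedge_smul_right,
    hstar_smul, hstar_wedge_omegaCY_sq h2 hα, inv_smul_smul₀ two_ne_zero,
    add_sub_cancel]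

/-! ### The imaginary part of `(ω + F)⁴` -/

lemma star_omegaCY : star omegaCY = omegaCY := by
  funext s
  simp only [omegaCY, Pi.star_apply]
  split_ifs <;> simp

lemma star_eq_neg_of_re_eq_zero {F : Form ℂ n} (hF : ∀ s, (F s).re = 0) : star F = -F := by
  funext s
  apply Complex.ext <;> simp [hF s]

lemma wedge_pow_four_omegaCY_add_univ {F : Form ℂ 8} (h2 : isGrade 2 F) :
    wedge (omegaCY + F) (wedge (omegaCY + F) (wedge (omegaCY + F) (omegaCY + F))) Finset.univ -
        wedge (omegaCY - F) (wedge (omegaCY - F) (wedge (omegaCY - F) (omegaCY - F))) Finset.univ =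
      48 * inner' (F + (6 : ℂ)⁻¹ • hstar (wedge F (wedge F F))) omegaCY := by
  rw [← Pi.sub_apply, wedge_pow_four_add_sub_wedge_pow_four_sub even_two isGrade_omegaCY h2,
    Pi.smul_apply, Pi.add_apply, ← inner'_hstar_left, ← inner'_hstar_left, hstar_omegaCY_cubed,
    inner'_add_left, inner'_smul_left, inner'_smul_left, inner'_comm F, smul_eq_mul]
  ring

lemma two_mul_im_wedge_pow_four {F : Form ℂ 8} (h2 : isGrade 2 F) (hF : ∀ s, (F s).re = 0) :
    2 * ((wedge (omegaCY + F) (wedge (omegaCY + F) (wedge (omegaCY + F) (omegaCY + F)))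
        Finset.univ).im : ℂ) * Complex.I =
      48 * inner' (F + (6 : ℂ)⁻¹ • hstar (wedge F (wedge F F))) omegaCY := by
  have hconj : star (omegaCY + F) = omegaCY - F := by
    rw [star_add, star_omegaCY, star_eq_neg_of_re_eq_zero hF, sub_eq_add_neg]
  rw [← wedge_pow_four_omegaCY_add_univ h2, ← hconj]
  simp only [← star_wedge, Pi.star_apply, Complex.star_def]
  rw [Complex.sub_conj]
  push_cast
  ring

lemma im_wedge_pow_four_eq_zero_iff {F : Form ℂ 8} (h2 : isGrade 2 F) (hF : ∀ s, (F s).re = 0) :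
    (∀ s, (wedge (omegaCY + F)
        (wedge (omegaCY + F) (wedge (omegaCY + F) (omegaCY + F))) s).im = 0) ↔
      inner' (F + (6 : ℂ)⁻¹ • hstar (wedge F (wedge F F))) omegaCY = 0 := by
  have hgrade : isGrade 2 (omegaCY + F) := isGrade_add isGrade_omegaCY h2
  have htop : isGrade 8
      (wedge (omegaCY + F) (wedge (omegaCY + F) (wedge (omegaCY + F) (omegaCY + F)))) :=
    isGrade_wedge hgrade (isGrade_wedge hgrade (isGrade_wedge hgrade hgrade))
  have hkey := two_mul_im_wedge_pow_four h2 hF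
  constructor
  · intro h
    rw [h, Complex.ofReal_zero, mul_zero, zero_mul, eq_comm] at hkey
    exact (mul_eq_zero.mp hkey).resolve_left (by norm_num)
  · intro h s
    by_cases hs : s = Finset.univ
    · rw [h, mul_zero] at hkey
      simpa [hs] using hkey
    · rw [htop s fun hcard => hs (Finset.card_eq_iff_eq_univ s |>.mp hcard), Complex.zero_im]

lemma omegaCY_ne_zero : omegaCY ≠ 0 := fun h => by
  simpa [inner', h] using inner'_omegaCY_omegaCY

/-- Lemma 7.2.  Let `F` be an `√-1 ℝ`-valued 2-form on `ℝ⁸ = ℂ⁴` with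
`F(J·, J·) = F(·,·)` (i.e. `F^{0,2} = 0`).  Then `F` is a dHYM curvature with phase 1,
`Im (ω + F)⁴ = 0`, if and only if
`(F + (1/6) *F³) + *((F + (1/6) *F³) ∧ Φ) = 0`, i.e. `π²₇(F + (1/6) *F³) = 0`
for the Cayley form `Φ = ω²/2 + Re Ω`. -/
theorem statement17 (F : Form ℂ 8) (h2 : isGrade 2 F)
    (hIm : ∀ s, (F s).re = 0)
    (hJ : ∀ v w : Fin 8 → ℂ, evalForm F ![Jv v, Jv w] = evalForm F ![v, w]) :
    (∀ s, ((wedge (omegaCY + F)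
        (wedge (omegaCY + F) (wedge (omegaCY + F) (omegaCY + F)))) s).im = 0) ↔
    ((F + (6 : ℂ)⁻¹ • hstar (wedge F (wedge F F))) +
        hstar (wedge (F + (6 : ℂ)⁻¹ • hstar (wedge F (wedge F F))) PhiCY) = 0) := by
  have hF : IsJInvariant F := isJInvariant_of_evalForm h2 hJ
  have hcubed : isGrade 6 (wedge F (wedge F F)) := isGrade_wedge h2 (isGrade_wedge h2 h2)
  have hgrade : isGrade 2 (F + (6 : ℂ)⁻¹ • hstar (wedge F (wedge F F))) :=
    isGrade_add h2 (isGrade_smul _ (isGrade_hstar rfl hcubed))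
  have hinv : IsJInvariant (F + (6 : ℂ)⁻¹ • hstar (wedge F (wedge F F))) :=
    hF.add ((hF.wedge (hF.wedge hF)).hstar.smul _)
  rw [im_wedge_pow_four_eq_zero_iff h2 hIm, add_hstar_wedge_PhiCY hgrade hinv, smul_eq_zero,
    or_iff_left omegaCY_ne_zero]

end FMpaper
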